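/- Let X be an n-element set (n ≥ 1) and suppose exactly k of the singleton blocks of π_X are labelled. Then the cardinality P(n,k) of Π_l(X,π_X) satisfies: P(n,0) = ∑_{j=1}^{n} C(n,j) B(j) B(n−j), and for k ≥ 1, P(n,k) = ∑_{j=0}^{n−k} C(n−k,j) B(k+j) B(n−k−j), where B(m) is the m-th Bell number. -/

import Mathlib

open scoped Classical

noncomputable section

/-! ## Labelled set partitions -/

/-- A labelled set partition of a finite set `α`: a set partition of `α` (encoded as the
equivalence relation `rel` whose classes are the blocks) in which each block either carries
the label `l` or not (a point `x` lies in `lab` iff the block of `x` is labelled). -/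
@[ext]
structure LPart (α : Type*) where
  rel : Setoid α
  lab : Set α
  lab_mem : ∀ ⦃x y : α⦄, rel x y → (x ∈ lab ↔ y ∈ lab)

namespace LPart

variable {α : Type*}

/-- `σ ≤ π` iff every block of `σ` (together with its label) is contained in a block of `π`. -/
instance : PartialOrder (LPart α) where
  le σ π := σ.rel ≤ π.rel ∧ σ.lab ⊆ π.lab
  le_refl σ := ⟨le_rfl, subset_rfl⟩
  le_trans _ _ _ h h' := ⟨h.1.trans h'.1, h.2.trans h'.2⟩
  le_antisymm σ π h h' := LPart.ext (le_antisymm h.1 h'.1) (le_antisymm h.2 h'.2)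

/-- The join (smallest common coarsening) of two labelled set partitions: the join of the
underlying partitions, a block being labelled iff it contains a labelled block of one of the
two partitions. -/
def sup (σ π : LPart α) : LPart α where
  rel := σ.rel ⊔ π.rel
  lab := {x | ∃ y, (σ.rel ⊔ π.rel) x y ∧ (y ∈ σ.lab ∨ y ∈ π.lab)}
  lab_mem := by
    intro x y h
    constructor
    · rintro ⟨z, hz, hl⟩
      exact ⟨z, (σ.rel ⊔ π.rel).iseqv.trans ((σ.rel ⊔ π.rel).iseqv.symm h) hz, hl⟩
    · rintro ⟨z, hz, hl⟩
      exact ⟨z, (σ.rel ⊔ π.rel).iseqv.trans h hz, hl⟩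

instance _root_.Setoid.finite [Finite α] : Finite (Setoid α) :=
  Finite.of_injective (fun s : Setoid α => ⇑s) fun _ _ h => Setoid.eq_iff_rel_eq.2 h

instance [Finite α] : Finite (LPart α) :=
  Finite.of_injective (fun π : LPart α => (π.rel, π.lab))
    (fun a b h => by
      cases a; cases b
      simpa [LPart.mk.injEq] using h)

instance fintype [Finite α] : Fintype (LPart α) := Fintype.ofFinite _

/-- `π` has exactly one labelled block. -/
def OneLab (π : LPart α) : Prop :=
  π.lab.Nonempty ∧ ∀ x ∈ π.lab, ∀ y ∈ π.lab, π.rel x y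

/-- The indicator `m(π)` that `π` has exactly one labelled block. -/
def m (π : LPart α) : ℝ := if π.OneLab then 1 else 0

/-- The labelled set partition `π_X` into singleton blocks, the singleton `{x}` being
labelled iff `x ∈ K`. -/
def piX (K : Set α) : LPart α :=
  ⟨⊥, K, fun x y h => by
    have : x = y := by
      have := Setoid.bot_def (α := α)
      exact congrFun (congrFun this x) y ▸ h
    rw [this]⟩

end LPart

/-- The Möbius function of a finite poset (the unique `μ` with `μ ⋆ ζ = δ`),
evaluated at a pair of elements. -/
def mobius {P : Type*} [Fintype P] [PartialOrder P] (x y : P) : ℝ :=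
  letI : LocallyFiniteOrder P := Fintype.toLocallyFiniteOrder
  IncidenceAlgebra.mu ℝ x y

/-- The state set `Π_l(X, π_X)`: all labelled set partitions `π ≥ π_X` having at least one
labelled block. -/
abbrev LStates (α : Type*) (K : Set α) : Type _ :=
  {π : LPart α // LPart.piX K ≤ π ∧ π.lab.Nonempty}

noncomputable instance {α : Type*} [Finite α] (K : Set α) : Fintype (LStates α K) :=
  Fintype.ofFinite _

/-- `λ(π) = ∑_{σ ∈ Π_l(X,π_X), σ ≥ π} μ_{Π_l(X)}(π, σ) m(σ)`. -/
def lamda {α : Type*} [Finite α] (K : Set α) (π : LPart α) : ℝ :=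
  letI : Fintype (LPart α) := LPart.fintype
  ∑ σ : LStates α K, if π ≤ σ.1 then mobius π σ.1 * LPart.m σ.1 else 0

/-- The `m`-th Bell number: the number of set partitions (equivalence relations) of an
`m`-element set. -/
def bell (m : ℕ) : ℕ := Nat.card (Setoid (Fin m))

/-!
A state is a set `S ⊇ K`, the nonempty union of its labelled blocks, together with a partition of
`S` and a partition of `Sᶜ`. Writing `S = K ∪ T` with `T ⊆ Kᶜ` and grouping by `j = |T|` gives both
formulas at once; the nonemptiness of `S` only matters when `K = ∅`, where it removes `j = 0`.
-/

section SumSuperset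

variable {α M : Type*} [AddCommMonoid M]

theorem sum_Icc_apply_card [DecidableEq α] {s t : Finset α} (hst : s ⊆ t) (f : ℕ → M) :
    ∑ u ∈ Finset.Icc s t, f u.card =
      ∑ j ∈ Finset.range (t.card - s.card + 1), (t.card - s.card).choose j • f (s.card + j) := by
  have disjoint_of_mem {u : Finset α} (hu : u ∈ (t \ s).powerset) : Disjoint s u :=
    Finset.disjoint_sdiff.mono_right (Finset.mem_powerset.1 hu)
  rw [Finset.Icc_eq_image_powerset hst, Finset.sum_image, ← Finset.card_sdiff_of_subset hst,
    ← Finset.sum_powerset_apply_card fun j => f (s.card + j)]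
  · exact Finset.sum_congr rfl fun u hu => by
      rw [Finset.card_union_of_disjoint (disjoint_of_mem hu)]
  · intro u hu v hv (huv : s ∪ u = s ∪ v)
    rw [← Finset.union_sdiff_cancel_left (disjoint_of_mem hu), huv,
      Finset.union_sdiff_cancel_left (disjoint_of_mem hv)]

theorem sum_superset_apply_ncard [Fintype α] (K : Set α) (f : ℕ → M) :
    ∑ S : Set α with K ⊆ S, f S.ncard =
      ∑ j ∈ Finset.range (Fintype.card α - K.ncard + 1),
        (Fintype.card α - K.ncard).choose j • f (K.ncard + j) := by
  rw [Set.ncard_eq_toFinset_card', ← Finset.card_univ,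
    ← sum_Icc_apply_card (Finset.subset_univ _)]
  refine Finset.sum_equiv Fintype.finsetEquivSet.symm (fun S => ?_) fun S _ => ?_
  · rw [Finset.mem_filter_univ]
    simp [Finset.subset_iff, Set.subset_def]
  · simp [Set.ncard_eq_toFinset_card']

end SumSuperset

section Setoid

variable {α β : Type*}

/-- Transport of equivalence relations along a bijection of the underlying types. -/
def setoidCongr (e : α ≃ β) : Setoid α ≃ Setoid β where
  toFun r := r.comap e.symm
  invFun r := r.comap e
  left_inv r := by ext x y; simp [Setoid.comap_rel]
  right_inv r := by ext x y; simp [Setoid.comap_rel]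

theorem card_setoid [Finite α] : Nat.card (Setoid α) = bell (Nat.card α) :=
  Nat.card_congr (setoidCongr (Finite.equivFin α))

/-- The equivalence relations refining the partition of `α` into the fibres of `f` correspond to
families of equivalence relations, one on each fibre. -/
def setoidLeKerEquiv (f : α → β) :
    {r : Setoid α // r ≤ Setoid.ker f} ≃ ∀ b, Setoid {x // f x = b} where
  toFun r b := r.1.comap Subtype.val
  invFun s :=
    { val :=
        { r := fun x y => ∃ (b : β) (hx : f x = b) (hy : f y = b), s b ⟨x, hx⟩ ⟨y, hy⟩
          iseqv :=
            { refl := fun x => ⟨f x, rfl, rfl, (s _).refl _⟩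
              symm := fun ⟨b, hx, hy, h⟩ => ⟨b, hy, hx, (s b).symm h⟩
              trans := by
                rintro x y z ⟨b, hx, hy, hxy⟩ ⟨_, rfl, hz, hyz⟩
                subst hy
                exact ⟨_, hx, hz, (s _).trans hxy hyz⟩ } }
      property := fun _ _ ⟨_, hx, hy, _⟩ => hx.trans hy.symm }
  left_inv r := by
    ext x y
    exact ⟨fun ⟨_, _, _, h⟩ => h, fun h => ⟨f y, r.2 h, rfl, h⟩⟩
  right_inv s := by
    ext b ⟨x, hx⟩ ⟨y, hy⟩
    constructor
    · rintro ⟨_, rfl, _, h⟩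
      subst hx
      exact h
    · exact fun h => ⟨b, hx, hy, h⟩

theorem card_setoid_le_ker [Finite α] [Fintype β] (f : α → β) :
    Nat.card {r : Setoid α // r ≤ Setoid.ker f} = ∏ b, bell (Nat.card {x // f x = b}) := by
  rw [Nat.card_congr (setoidLeKerEquiv f), Nat.card_pi]
  exact Finset.prod_congr rfl fun _ _ => card_setoid

theorem card_setoid_le_ker_mem [Finite α] (S : Set α) :
    Nat.card {r : Setoid α // r ≤ Setoid.ker (· ∈ S)} = bell S.ncard * bell Sᶜ.ncard := by
  rw [card_setoid_le_ker, Fintype.prod_Prop]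
  simp only [eq_iff_iff, iff_true, iff_false, ← Nat.card_coe_set_eq, Set.coe_eq_subtype,
    Set.mem_compl_iff]

end Setoid

section LStates

variable {α : Type*}

/-- A state is determined by the union `S` of its labelled blocks and its underlying partition,
which is any partition refining `{S, Sᶜ}`. -/
def lStatesEquivSigma (K : Set α) :
    LStates α K ≃
      Σ S : {S : Set α // K ⊆ S ∧ S.Nonempty}, {r : Setoid α // r ≤ Setoid.ker (· ∈ S.1)} where
  toFun π := ⟨⟨π.1.lab, π.2.1.2, π.2.2⟩, π.1.rel, fun _ _ h => propext (π.1.lab_mem h)⟩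
  invFun p := ⟨⟨p.2.1, p.1.1, fun _ _ h => iff_of_eq (p.2.2 h)⟩, ⟨bot_le, p.1.2.1⟩, p.1.2.2⟩
  left_inv _ := rfl
  right_inv _ := rfl

theorem card_lStates_eq_sum_set [Fintype α] (K : Set α) :
    Nat.card (LStates α K) =
      ∑ S : Set α with K ⊆ S ∧ S.Nonempty, bell S.ncard * bell Sᶜ.ncard := by
  rw [Nat.card_congr (lStatesEquivSigma K), Nat.card_sigma]
  simp only [card_setoid_le_ker_mem]
  exact (Finset.sum_subtype _ (fun S => Finset.mem_filter_univ S)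
    fun S : Set α => bell S.ncard * bell Sᶜ.ncard).symm

theorem card_lStates_eq_sum_choose [Fintype α] (K : Set α) :
    Nat.card (LStates α K) =
      ∑ j ∈ Finset.range (Fintype.card α - K.ncard + 1) with K.ncard + j ≠ 0,
        (Fintype.card α - K.ncard).choose j *
          (bell (K.ncard + j) * bell (Fintype.card α - K.ncard - j)) := by
  rw [card_lStates_eq_sum_set]
  -- As a condition on `|S|`, nonemptiness of `S` can be absorbed into the summand.
  have sum_eq := sum_superset_apply_ncard K fun m =>
    if m ≠ 0 then bell m * bell (Fintype.card α - m) else 0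
  simp only [smul_eq_mul, mul_ite, mul_zero, ← Finset.sum_filter, Nat.sub_add_eq] at sum_eq
  rw [← sum_eq, Finset.filter_filter]
  refine Finset.sum_congr (Finset.filter_congr fun S _ => ?_) fun S _ => ?_
  · rw [Set.nonempty_iff_ne_empty, ne_eq, ne_eq, Set.ncard_eq_zero S.toFinite]
  · rw [Set.ncard_compl, Nat.card_eq_fintype_card]

end LStates

/-- The cardinality `P(n,k)` of `Π_l(X,π_X)`, where `X` has `n ≥ 1` elements and `π_X` has
`k` labelled (and `n - k` unlabelled) singleton blocks, satisfies
`P(n,0) = ∑_{j=1}^{n} C(n,j) B(j) B(n-j)` and, for `k ≥ 1`,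
`P(n,k) = ∑_{j=0}^{n-k} C(n-k,j) B(k+j) B(n-k-j)`. -/
theorem card_states {α : Type*} [Fintype α] (K : Set α) (n k : ℕ)
    (hn : Fintype.card α = n) (hk : K.ncard = k) (hn1 : 1 ≤ n) :
    (k = 0 →
        Nat.card (LStates α K) =
          ∑ j ∈ Finset.Icc 1 n, n.choose j * (bell j * bell (n - j))) ∧
      (1 ≤ k →
        Nat.card (LStates α K) =
          ∑ j ∈ Finset.range (n - k + 1), (n - k).choose j * (bell (k + j) * bell (n - k - j))) := by
  rw [card_lStates_eq_sum_choose, hn, hk]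
  constructor
  · rintro rfl
    refine Finset.sum_congr ?_ fun j _ => by simp
    ext j
    rw [Finset.mem_filter, Finset.mem_range, Finset.mem_Icc]
    omega
  · intro hk1
    rw [Finset.filter_true_of_mem fun j _ => by omega]

end
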